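/- For almost every pair (α, β) (with respect to Lebesgue measure on the set {(α, β) ∈ ℝ² : α > 0, β > 0, α + β < π}), the triangle T with angles α, β and π − α − β has the following property: there exists ε > 0 such that limsup_{n→∞} h(n, T, ε)/C(n, 3) ≤ 0.25072. -/

import Mathlib

open EuclideanGeometry

noncomputable section

abbrev Plane := EuclideanSpace ℝ (Fin 2)

/-- A triple of points is a (non-degenerate) triangle if its points are not collinear. -/
def IsTriangle (p : Fin 3 → Plane) : Prop := ¬ Collinear ℝ (Set.range p)

/-- The angle of the triple `p` at its `i`-th vertex. -/
noncomputable def triAngle (p : Fin 3 → Plane) (i : Fin 3) : ℝ :=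
  EuclideanGeometry.angle (p (i + 1)) (p i) (p (i + 2))

/-- `p` is ε-similar to `T`: some correspondence of vertices makes corresponding
angles differ by less than ε. -/
def EpsSimilar (ε : ℝ) (p T : Fin 3 → Plane) : Prop :=
  ∃ σ : Equiv.Perm (Fin 3), ∀ i, |triAngle p i - triAngle T (σ i)| < ε

/-- The finite set `S` forms a triangle ε-similar to `T`. -/
def FormsSimilar (ε : ℝ) (T : Fin 3 → Plane) (S : Finset Plane) : Prop :=
  ∃ p : Fin 3 → Plane, (S : Set Plane) = Set.range p ∧ IsTriangle p ∧ EpsSimilar ε p T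

/-- The number of 3-element subsets of `P` forming a triangle ε-similar to `T`. -/
noncomputable def simCount (ε : ℝ) (T : Fin 3 → Plane) (P : Finset Plane) : ℕ :=
  Set.ncard {S : Finset Plane | S ⊆ P ∧ S.card = 3 ∧ FormsSimilar ε T S}

/-- `hGeo n T ε` = maximum over `n`-point sets `P` of the number of 3-element
subsets of `P` forming a triangle ε-similar to `T`. -/
noncomputable def hGeo (n : ℕ) (T : Fin 3 → Plane) (ε : ℝ) : ℕ :=
  sSup {m | ∃ P : Finset Plane, P.card = n ∧ simCount ε T P = m}

/-- The recurrence defining the sequence `h`. -/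
def HRec (h : ℕ → ℕ) : Prop :=
  h 0 = 0 ∧ h 1 = 0 ∧ h 2 = 0 ∧
  ∀ n, 3 ≤ n → IsGreatest
    {m | ∃ a b c : ℕ, a + b + c = n ∧ a ≤ n - 1 ∧ b ≤ n - 1 ∧ c ≤ n - 1 ∧
      m = a * b * c + h a + h b + h c} (h n)


def rowM {V K : Type*} [DecidableEq V] [CommRing K] (v0 : V) (t : V × V × V × Bool → K) :
    Matrix (Option (V × V × V × Bool)) V K :=
  fun o => match o with
  | none => Pi.single v0 1
  | some r => Pi.single r.2.2.1 1 - Pi.single r.1 1 - t r • (Pi.single r.2.1 1 - Pi.single r.1 1)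

lemma rowM_map {V K L : Type*} [DecidableEq V] [CommRing K] [CommRing L] (f : K →+* L) (v0 : V)
    (t : V × V × V × Bool → K) : (rowM v0 t).map f = rowM v0 (fun r => f (t r)) := by
  ext o j
  rcases o with _ | r
  · simp [rowM, Pi.single_apply, apply_ite f]
  · simp [rowM, Pi.single_apply, apply_ite f]

lemma rowM_mulVec_none {V K : Type*} [Fintype V] [DecidableEq V] [CommRing K] (v0 : V)
    (t : V × V × V × Bool → K) (q : V → K) : (rowM v0 t).mulVec q none = q v0 := by
  simp [rowM, Matrix.mulVec]

lemma rowM_mulVec_some {V K : Type*} [Fintype V] [DecidableEq V] [CommRing K] (v0 : V)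
    (t : V × V × V × Bool → K) (q : V → K) (r) : (rowM v0 t).mulVec q (some r) =
      q r.2.2.1 - q r.1 - t r * (q r.2.1 - q r.1) := by
  change (Pi.single r.2.2.1 1 - Pi.single r.1 1 - t r • (Pi.single r.2.1 1 - Pi.single r.1 1))
    ⬝ᵥ q = _
  simp only [sub_dotProduct, smul_dotProduct, single_one_dotProduct, smul_eq_mul]

def liftB {V : Type*} (B : Matrix V (Option (V × V × V × Bool)) (ZMod 3)) :
    Matrix V (Option (V × V × V × Bool)) ℤ := B.map (fun x => (x.val : ℤ))

def DD {V K : Type*} [Fintype V] [DecidableEq V] [CommRing K] (v0 : V)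
    (B : Matrix V (Option (V × V × V × Bool)) (ZMod 3)) (t : V × V × V × Bool → K) : K :=
  Matrix.det ((liftB B).map (Int.castRingHom K) * rowM v0 t)

lemma DD_map {V K L : Type*} [Fintype V] [DecidableEq V] [CommRing K] [CommRing L] (f : K →+* L)
    (v0 : V) (B : Matrix V (Option (V × V × V × Bool)) (ZMod 3)) (t : V × V × V × Bool → K) :
    f (DD v0 B t) = DD v0 B (fun r => f (t r)) := by
  unfold DD
  rw [RingHom.map_det, RingHom.mapMatrix_apply, Matrix.map_mul, rowM_map, Matrix.map_map]
  congr 3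
  ext x
  simp

lemma DD_three {V : Type*} [Fintype V] [DecidableEq V] (v0 : V)
    (B : Matrix V (Option (V × V × V × Bool)) (ZMod 3)) (t : V × V × V × Bool → ZMod 3) :
    DD v0 B t = Matrix.det (B * rowM v0 t) := by
  have : (liftB B).map (Int.castRingHom (ZMod 3)) = B := by
    ext i j
    simp [liftB]
  rw [DD, this]

def Good (z w : ℂ) : Prop :=
  ∀ f : MvPolynomial (Fin 2) ℤ, f ≠ 0 → MvPolynomial.aeval ![z, w] f ≠ 0

lemma det_ne {V : Type*} [Fintype V] [DecidableEq V] {z w : ℂ} (hg : Good z w) (v0 : V)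
    (B : Matrix V (Option (V × V × V × Bool)) (ZMod 3))
    (hB : B * rowM (K := ZMod 3) v0 (fun _ => -1) = 1) :
    DD v0 B (fun r => if r.2.2.2 then z else w) ≠ 0 := by
  set f : MvPolynomial (Fin 2) ℤ :=
    DD v0 B (fun r => if r.2.2.2 then MvPolynomial.X 0 else MvPolynomial.X 1) with hf
  have h1 : (MvPolynomial.aeval ![z, w] : MvPolynomial (Fin 2) ℤ →ₐ[ℤ] ℂ) f =
      DD v0 B (fun r => if r.2.2.2 then z else w) := by
    have := DD_map (MvPolynomial.aeval ![z, w] : MvPolynomial (Fin 2) ℤ →ₐ[ℤ] ℂ).toRingHom v0 B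
      (fun r => if r.2.2.2 then MvPolynomial.X 0 else MvPolynomial.X 1)
    refine Eq.trans this ?_
    congr 1
    ext r
    split_ifs <;> simp
  rw [← h1]
  apply hg
  intro h0
  have := DD_map (MvPolynomial.aeval ![-1, -1] :
      MvPolynomial (Fin 2) ℤ →ₐ[ℤ] ZMod 3).toRingHom v0 B
      (fun r => if r.2.2.2 then MvPolynomial.X 0 else MvPolynomial.X 1)
  rw [← hf, h0, map_zero, DD_three] at this
  have h2 : (fun r : V × V × V × Bool => (MvPolynomial.aeval ![-1, -1] :
      MvPolynomial (Fin 2) ℤ →ₐ[ℤ] ZMod 3).toRingHom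
      (if r.2.2.2 then MvPolynomial.X 0 else MvPolynomial.X 1)) = fun _ => -1 := by
    ext r
    split_ifs <;> simp
  rw [h2, hB, Matrix.det_one] at this
  exact zero_ne_one this

lemma DD_cont {V : Type*} [Fintype V] [DecidableEq V] (v0 : V)
    (B : Matrix V (Option (V × V × V × Bool)) (ZMod 3)) :
    Continuous (fun t : V × V × V × Bool → ℂ => DD v0 B t) := by
  unfold DD
  apply Continuous.matrix_det
  apply Continuous.matrix_mul continuous_const
  refine continuous_matrix ?_
  rintro (_ | r) j
  · exact continuous_const
  · simp only [rowM, Pi.sub_apply, Pi.smul_apply, smul_eq_mul]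
    fun_prop

lemma exists_delta {V : Type*} [Fintype V] [DecidableEq V] {z w : ℂ} (hg : Good z w) (v0 : V) :
    ∃ δ > 0, ∀ t : V × V × V × Bool → ℂ, (∀ r, dist (t r) (if r.2.2.2 then z else w) < δ) →
      ∀ B : Matrix V (Option (V × V × V × Bool)) (ZMod 3),
      B * rowM (K := ZMod 3) v0 (fun _ => -1) = 1 → DD v0 B t ≠ 0 := by
  have h : ∀ B : Matrix V (Option (V × V × V × Bool)) (ZMod 3), ∀ᶠ t in
      nhds (fun r : V × V × V × Bool => if r.2.2.2 then z else w),
      B * rowM (K := ZMod 3) v0 (fun _ => -1) = 1 → DD v0 B t ≠ 0 := by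
    intro B
    by_cases hB : B * rowM (K := ZMod 3) v0 (fun _ => -1) = 1
    · filter_upwards [(DD_cont v0 B).continuousAt.eventually_ne (det_ne hg v0 B hB)] with t ht _
      exact ht
    · exact Filter.Eventually.of_forall fun t h => absurd h hB
  have : Finite (Matrix V (Option (V × V × V × Bool)) (ZMod 3)) :=
    inferInstanceAs (Finite (V → Option (V × V × V × Bool) → ZMod 3))
  have h2 := Filter.eventually_all.2 h
  obtain ⟨δ, hδ, H⟩ := Metric.eventually_nhds_iff.1 h2
  refine ⟨δ, hδ, fun t ht => H ?_⟩
  exact (dist_pi_lt_iff hδ).2 ht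

lemma exists_B {V : Type*} [Fintype V] [DecidableEq V] (v0 : V) (A : Set (V × V × V × Bool))
    (hA : ∀ φ : V → ZMod 3, φ v0 = 0 → (∀ r ∈ A, φ r.1 + φ r.2.1 + φ r.2.2.1 = 0) → φ = 0) :
    ∃ B : Matrix V (Option (V × V × V × Bool)) (ZMod 3),
      B * rowM (K := ZMod 3) v0 (fun _ => -1) = 1 ∧ ∀ r ∉ A, ∀ i, B i (some r) = 0 := by
  classical
  set M := rowM (K := ZMod 3) v0 (fun _ => -1) with hM
  set s : Option (V × V × V × Bool) → ZMod 3 :=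
    fun o => match o with
    | none => 1
    | some r => if r ∈ A then 1 else 0 with hs
  have hker : LinearMap.ker (Matrix.toLin' (Matrix.diagonal s * M)) = ⊥ := by
    rw [LinearMap.ker_eq_bot']
    intro φ hφ
    rw [Matrix.toLin'_apply, ← Matrix.mulVec_mulVec] at hφ
    apply hA φ
    · have := congrFun hφ none
      rw [Matrix.mulVec_diagonal, hM, rowM_mulVec_none] at this
      simpa [hs] using this
    · intro r hr
      have := congrFun hφ (some r)
      rw [Matrix.mulVec_diagonal, hM, rowM_mulVec_some] at this
      simp only [hs, hr, if_true, Pi.zero_apply, one_mul] at this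
      have h3 : (3 : ZMod 3) = 0 := by decide
      linear_combination this + φ r.1 * h3
  obtain ⟨g, hg⟩ := LinearMap.exists_leftInverse_of_injective _ hker
  refine ⟨LinearMap.toMatrix' g * Matrix.diagonal s, ?_, ?_⟩
  · rw [Matrix.mul_assoc]
    have := congrArg LinearMap.toMatrix' hg
    rwa [LinearMap.toMatrix'_comp, LinearMap.toMatrix'_toLin', LinearMap.toMatrix'_id] at this
  · intro r hr i
    simp [Matrix.mul_diagonal, hs, hr]

lemma core {V : Type*} [Fintype V] [DecidableEq V] {z w : ℂ} (hg : Good z w) (v0 : V) :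
    ∃ δ > 0, ∀ p : V → ℂ, (∃ i, p i ≠ p v0) →
      ∃ φ : V → ZMod 3, (∃ i, φ i ≠ φ v0) ∧ ∀ a b c : V, ∀ t : ℂ,
        (dist t z < δ ∨ dist t w < δ) → p c - p a = t * (p b - p a) → φ a + φ b + φ c = 0 := by
  obtain ⟨δ, hδ, H⟩ := exists_delta hg v0
  refine ⟨δ, hδ, fun p hp => ?_⟩
  by_contra hcon
  push Not at hcon
  set A : Set (V × V × V × Bool) := {r | ∃ t : ℂ, dist t (if r.2.2.2 then z else w) < δ ∧
    p r.2.2.1 - p r.1 = t * (p r.2.1 - p r.1)} with hAdef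
  obtain ⟨B, hB, hB0⟩ := exists_B v0 A (by
    intro φ h0 hφ
    by_contra hne
    obtain ⟨i, hi⟩ := Function.ne_iff.1 hne
    obtain ⟨a, b, c, t, ht, he, hn⟩ := hcon φ ⟨i, by rw [h0]; exact hi⟩
    rcases ht with ht | ht
    · exact hn (hφ (a, b, c, true) ⟨t, by simpa using ht, he⟩)
    · exact hn (hφ (a, b, c, false) ⟨t, by simpa using ht, he⟩))
  have hT : ∀ r : V × V × V × Bool, ∃ t : ℂ, dist t (if r.2.2.2 then z else w) < δ ∧
      (r ∈ A → p r.2.2.1 - p r.1 = t * (p r.2.1 - p r.1)) := by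
    intro r
    by_cases hr : r ∈ A
    · obtain ⟨t, h1, h2⟩ := hr
      exact ⟨t, h1, fun _ => h2⟩
    · exact ⟨_, by rw [dist_self]; exact hδ, fun h => absurd h hr⟩
  choose t ht1 ht2 using hT
  have hdet := H t ht1 B hB
  have hz := Matrix.eq_zero_of_mulVec_eq_zero (v := fun i => p i - p v0) hdet (by
    rw [← Matrix.mulVec_mulVec]
    ext i
    simp only [Matrix.mulVec, dotProduct, Pi.zero_apply]
    apply Finset.sum_eq_zero
    rintro (_ | r) -
    · have := rowM_mulVec_none v0 t (fun i => p i - p v0)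
      simp only [Matrix.mulVec, dotProduct] at this
      rw [this]; simp
    · by_cases hr : r ∈ A
      · have := rowM_mulVec_some v0 t (fun i => p i - p v0) r
        simp only [Matrix.mulVec, dotProduct] at this
        rw [this]
        have := ht2 r hr
        refine mul_eq_zero_of_right _ ?_
        linear_combination this
      · refine mul_eq_zero_of_left ?_ _
        simp [liftB, hB0 r hr i])
  obtain ⟨i, hi⟩ := hp
  exact hi (sub_eq_zero.1 (congrFun hz i))
section
open Finset

set_option synthInstance.maxSize 2000 in
set_option synthInstance.maxHeartbeats 200000 in
lemma zmod3_aux : ∀ x y z : ZMod 3, x + y + z = 0 → (x = y ∧ y = z) ∨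
    (x = 0 ∧ y = 1 ∧ z = 2) ∨ (x = 0 ∧ y = 2 ∧ z = 1) ∨ (x = 1 ∧ y = 0 ∧ z = 2) ∨
    (x = 1 ∧ y = 2 ∧ z = 0) ∨ (x = 2 ∧ y = 0 ∧ z = 1) ∨ (x = 2 ∧ y = 1 ∧ z = 0) := by decide

lemma arith_aux (a b c : ℕ) : 24 * (a * b * c) + a ^ 3 + b ^ 3 + c ^ 3 ≤ (a + b + c) ^ 3 := by
  zify
  have ha : (0:ℤ) ≤ a := by positivity
  have hb : (0:ℤ) ≤ b := by positivity
  have hc : (0:ℤ) ≤ c := by positivity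
  nlinarith [mul_nonneg ha (sq_nonneg ((b:ℤ) - c)), mul_nonneg hb (sq_nonneg ((a:ℤ) - c)),
    mul_nonneg hc (sq_nonneg ((a:ℤ) - b))]

open Classical in
def cnt {X : Type*} (E : Finset X → Prop) (Q : Finset X) : ℕ := #{S ∈ Q.powersetCard 3 | E S}

open Classical in
lemma cnt_bound {X : Type*} (E : Finset X → Prop) (N : ℕ)
    (H : ∀ Q : Finset X, 2 ≤ #Q → #Q ≤ N → ∃ φ : X → ZMod 3,
      (∃ x ∈ Q, ∃ y ∈ Q, φ x ≠ φ y) ∧ ∀ S ⊆ Q, #S = 3 → E S → ∑ x ∈ S, φ x = 0) :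
    ∀ n, ∀ Q : Finset X, #Q = n → n ≤ N → 24 * cnt E Q + n ≤ n ^ 3 := by
  intro n
  induction n using Nat.strong_induction_on with
  | _ n ih =>
  intro Q hQ hn
  by_cases h2 : 2 ≤ n
  swap
  · have h0 : cnt E Q = 0 := by
      unfold cnt
      rw [powersetCard_eq_empty.2 (by omega)]; simp
    rw [h0]
    interval_cases n <;> simp
  obtain ⟨φ, ⟨x, hx, y, hy, hxy⟩, hφ⟩ := H Q (by omega) (by omega)
  set F : ZMod 3 → Finset X := fun i => {x ∈ Q | φ x = i} with hF
  have hFlt : ∀ i, #(F i) < n := by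
    intro i
    rw [← hQ]
    apply card_lt_card
    rw [filter_ssubset]
    by_cases hi : φ x = i
    · exact ⟨y, hy, fun h => hxy (hi.trans h.symm)⟩
    · exact ⟨x, hx, hi⟩
  have hsum : #(F 0) + #(F 1) + #(F 2) = n := by
    have := card_eq_sum_card_fiberwise (s := Q) (t := univ) (f := φ) (fun _ _ => by simp)
    rw [hQ] at this
    rw [this]
    exact (Fin.sum_univ_three (fun i : ZMod 3 => #(F i))).symm
  have hsub : ({S ∈ Q.powersetCard 3 | E S} : Finset (Finset X)) ⊆
      (({S ∈ (F 0).powersetCard 3 | E S} ∪ {S ∈ (F 1).powersetCard 3 | E S}) ∪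
        {S ∈ (F 2).powersetCard 3 | E S}) ∪
      (F 0 ×ˢ F 1 ×ˢ F 2).image (fun t => ({t.1, t.2.1, t.2.2} : Finset X)) := by
    intro S hS
    rw [mem_filter, mem_powersetCard] at hS
    obtain ⟨⟨hSQ, hS3⟩, hE⟩ := hS
    have hs := hφ S hSQ hS3 hE
    obtain ⟨a, b, c, hab, hac, hbc, rfl⟩ := card_eq_three.1 hS3
    rw [sum_insert (by simp [hab, hac]), sum_insert (by simp [hbc]), sum_singleton, ← add_assoc] at hs
    have ha : a ∈ Q := hSQ (by simp)
    have hb : b ∈ Q := hSQ (by simp)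
    have hc : c ∈ Q := hSQ (by simp)
    have tr : ∀ a b c : X, a ∈ Q → b ∈ Q → c ∈ Q → φ a = 0 → φ b = 1 → φ c = 2 →
        ({a, b, c} : Finset X) ∈ (F 0 ×ˢ F 1 ×ˢ F 2).image
          (fun t => ({t.1, t.2.1, t.2.2} : Finset X)) := by
      intro a b c ha hb hc h0 h1 h2
      exact mem_image.2 ⟨(a, b, c), by simp [hF, *], rfl⟩
    rcases zmod3_aux _ _ _ hs with ⟨h1, h2⟩ | h | h | h | h | h | h
    · apply mem_union_left
      have key : ∀ i, φ a = i → ({a, b, c} : Finset X) ∈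
          ({S ∈ (F i).powersetCard 3 | E S} : Finset (Finset X)) := by
        intro i hi
        rw [mem_filter, mem_powersetCard]
        refine ⟨⟨?_, hS3⟩, hE⟩
        intro u hu
        simp only [mem_insert, mem_singleton] at hu
        have h1' := h1.symm.trans hi
        have h2' := h2.symm.trans h1'
        rcases hu with rfl | rfl | rfl <;> simp [hF, *]
      have : ∀ i : ZMod 3, i = 0 ∨ i = 1 ∨ i = 2 := by decide
      rcases this (φ a) with h | h | h
      · exact mem_union_left _ (mem_union_left _ (key 0 h))
      · exact mem_union_left _ (mem_union_right _ (key 1 h))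
      · exact mem_union_right _ (key 2 h)
    all_goals apply mem_union_right
    · exact tr a b c ha hb hc h.1 h.2.1 h.2.2
    · convert tr a c b ha hc hb h.1 h.2.2 h.2.1 using 1
      ext; simp; tauto
    · convert tr b a c hb ha hc h.2.1 h.1 h.2.2 using 1
      ext; simp; tauto
    · convert tr c a b hc ha hb h.2.2 h.1 h.2.1 using 1
      ext; simp; tauto
    · convert tr b c a hb hc ha h.2.1 h.2.2 h.1 using 1
      ext; simp; tauto
    · convert tr c b a hc hb ha h.2.2 h.2.1 h.1 using 1
      ext; simp; tauto
  have hle : cnt E Q ≤ cnt E (F 0) + cnt E (F 1) + cnt E (F 2) + #(F 0) * #(F 1) * #(F 2) := by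
    unfold cnt
    refine (card_le_card hsub).trans ((card_union_le _ _).trans ?_)
    refine add_le_add ((card_union_le _ _).trans (add_le_add (card_union_le _ _) le_rfl)) ?_
    refine card_image_le.trans ?_
    rw [card_product, card_product, mul_assoc]
  have i0 := ih _ (hFlt 0) (F 0) rfl (by have := hFlt 0; omega)
  have i1 := ih _ (hFlt 1) (F 1) rfl (by have := hFlt 1; omega)
  have i2 := ih _ (hFlt 2) (F 2) rfl (by have := hFlt 2; omega)
  have := arith_aux #(F 0) #(F 1) #(F 2)
  rw [hsum] at this
  omega

open Classical in
lemma cnt_avg {X : Type*} (E : Finset X → Prop) (N n K : ℕ) (hN : 3 ≤ N)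
    (P : Finset X) (hP : #P = n) (hn : N ≤ n)
    (hK : ∀ Q ⊆ P, #Q = N → cnt E Q ≤ K) :
    cnt E P * (N.choose 3) ≤ K * n.choose 3 := by
  have h1 : cnt E P * (n - 3).choose (N - 3) ≤ ∑ Q ∈ P.powersetCard N, cnt E Q := by
    have e : ∑ Q ∈ P.powersetCard N, cnt E Q =
        ∑ S ∈ P.powersetCard 3 with E S, #{Q ∈ P.powersetCard N | S ⊆ Q} := by
      refine Eq.trans ?_ (sum_card_bipartiteAbove_eq_sum_card_bipartiteBelow
        (fun Q S : Finset X => S ⊆ Q) (s := P.powersetCard N))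
      apply sum_congr rfl
      intro Q hQ
      rw [mem_powersetCard] at hQ
      unfold cnt bipartiteAbove
      congr 1
      ext S
      simp only [mem_filter, mem_powersetCard]
      constructor
      · rintro ⟨⟨a, b⟩, c⟩; exact ⟨⟨⟨a.trans hQ.1, b⟩, c⟩, a⟩
      · rintro ⟨⟨⟨a, b⟩, c⟩, d⟩; exact ⟨⟨d, b⟩, c⟩
    rw [e]
    unfold cnt
    rw [← smul_eq_mul]
    apply card_nsmul_le_sum
    intro S hS
    rw [mem_filter, mem_powersetCard] at hS
    obtain ⟨⟨hSP, hS3⟩, -⟩ := hS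
    have hc : #(P \ S) = n - 3 := by rw [card_sdiff_of_subset hSP, hP, hS3]
    rw [← hc, ← card_powersetCard]
    apply card_le_card_of_injOn (fun R => R ∪ S)
    · intro R hR
      simp only [mem_coe, mem_powersetCard] at hR
      have hd : Disjoint R S := (disjoint_sdiff_self_left).mono_left hR.1
      simp only [mem_coe, mem_filter, mem_powersetCard]
      refine ⟨⟨union_subset (hR.1.trans sdiff_subset) hSP, ?_⟩, subset_union_right⟩
      rw [card_union_of_disjoint hd, hR.2, hS3]; omega
    · intro R hR R' hR' h
      simp only [mem_coe, mem_powersetCard] at hR hR'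
      have hd : Disjoint R S := (disjoint_sdiff_self_left).mono_left hR.1
      have hd' : Disjoint R' S := (disjoint_sdiff_self_left).mono_left hR'.1
      have := congrArg (· \ S) h
      simpa [union_sdiff_right, sdiff_eq_self_of_disjoint hd, sdiff_eq_self_of_disjoint hd'] using this
  have h2 : ∑ Q ∈ P.powersetCard N, cnt E Q ≤ n.choose N * K := by
    rw [← hP, ← card_powersetCard, ← smul_eq_mul]
    apply sum_le_card_nsmul
    intro Q hQ
    rw [mem_powersetCard] at hQ
    exact hK Q hQ.1 hQ.2
  have h3 := Nat.choose_mul (n := n) hN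
  have hpos : 0 < (n - 3).choose (N - 3) := Nat.choose_pos (by omega)
  apply Nat.le_of_mul_le_mul_right _ hpos
  calc cnt E P * N.choose 3 * (n - 3).choose (N - 3)
      = (cnt E P * (n - 3).choose (N - 3)) * N.choose 3 := by ring
    _ ≤ (n.choose N * K) * N.choose 3 := Nat.mul_le_mul_right _ (h1.trans h2)
    _ = K * (n.choose N * N.choose 3) := by ring
    _ = K * n.choose 3 * (n - 3).choose (N - 3) := by rw [h3]; ring

end
def ZZ (α β : ℝ) : ℂ := ((Real.sin β / Real.sin (α + β) : ℝ) : ℂ) * Complex.exp (α * Complex.I)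

def UU : Set (ℝ × ℝ) := {q : ℝ × ℝ | 0 < q.1 ∧ 0 < q.2 ∧ q.1 + q.2 < Real.pi}

lemma UU_meas : MeasurableSet UU := by
  have : IsOpen UU := by
    unfold UU
    apply IsOpen.inter (isOpen_lt continuous_const continuous_fst)
    apply IsOpen.inter (isOpen_lt continuous_const continuous_snd)
    exact isOpen_lt (continuous_fst.add continuous_snd) continuous_const
  exact this.measurableSet

/-- one-variable substitution -/
lemma eval_subst (F : MvPolynomial (Fin 2) ℂ) (a b : Polynomial ℂ) (x : ℂ) :
    (MvPolynomial.aeval ![a, b] F).eval x = MvPolynomial.eval ![a.eval x, b.eval x] F := by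
  induction F using MvPolynomial.induction_on with
  | C c => simp
  | add p q hp hq => simp [hp, hq]
  | mul_X p i hp =>
    rw [map_mul, Polynomial.eval_mul, hp, map_mul, MvPolynomial.aeval_X, MvPolynomial.eval_X]
    fin_cases i <;> simp

lemma badB_finite (F : MvPolynomial (Fin 2) ℂ) (hF : F ≠ 0) :
    {v : ℂ | ∀ s, MvPolynomial.eval ![v * s, s] F = 0}.Finite := by
  by_contra hinf
  have hinf : {v : ℂ | ∀ s, MvPolynomial.eval ![v * s, s] F = 0}.Infinite := hinf
  apply hF
  have h : F * MvPolynomial.X 1 = 0 := by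
    apply MvPolynomial.funext
    intro x
    rw [map_mul, MvPolynomial.eval_X, map_zero]
    by_cases hx : x 1 = 0
    · rw [hx, mul_zero]
    refine mul_eq_zero_of_left ?_ _
    have hp : (MvPolynomial.aeval ![Polynomial.X * Polynomial.C (x 1), Polynomial.C (x 1)] F
        : Polynomial ℂ) = 0 := by
      apply Polynomial.eq_zero_of_infinite_isRoot
      refine hinf.mono ?_
      intro v hv
      rw [Set.mem_ofPred_eq, Polynomial.IsRoot.def, eval_subst]
      simp only [Polynomial.eval_mul, Polynomial.eval_X, Polynomial.eval_C]
      exact hv (x 1)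
    have := eval_subst F (Polynomial.X * Polynomial.C (x 1)) (Polynomial.C (x 1)) (x 0 / x 1)
    rw [hp] at this
    simp only [Polynomial.eval_zero, Polynomial.eval_mul, Polynomial.eval_X, Polynomial.eval_C] at this
    rw [div_mul_cancel₀ _ hx] at this
    have hxx : x = ![x 0, x 1] := by
      funext i
      fin_cases i <;> simp
    rw [hxx]
    exact this.symm
  exact (mul_eq_zero.1 h).resolve_right (MvPolynomial.X_ne_zero 1)

lemma slice_finite (F : MvPolynomial (Fin 2) ℂ) (v : ℂ)
    (hv : v ∉ {v : ℂ | ∀ s, MvPolynomial.eval ![v * s, s] F = 0}) :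
    {s : ℂ | MvPolynomial.eval ![v * s, s] F = 0}.Finite := by
  by_contra hinf
  apply hv
  have hp : (MvPolynomial.aeval ![Polynomial.C v * Polynomial.X, Polynomial.X] F
        : Polynomial ℂ) = 0 := by
    apply Polynomial.eq_zero_of_infinite_isRoot
    refine Set.Infinite.mono ?_ hinf
    intro s hs
    rw [Set.mem_ofPred_eq, Polynomial.IsRoot.def, eval_subst]
    simpa using hs
  intro s
  have := eval_subst F (Polynomial.C v * Polynomial.X) Polynomial.X s
  rw [hp] at this
  simpa using this.symm

lemma ZZ_eq (α β : ℝ) : ZZ α β = Complex.exp (2 * α * Complex.I) *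
    (starRingEnd ℂ (ZZ α β)) := by
  unfold ZZ
  rw [map_mul, Complex.conj_ofReal, ← Complex.exp_conj, map_mul, Complex.conj_I, Complex.conj_ofReal,
    mul_left_comm, ← Complex.exp_add]
  congr 2
  ring

lemma ZZ_meas : Measurable (fun q : ℝ × ℝ => ZZ q.1 q.2) := by
  unfold ZZ
  fun_prop

lemma null_one (F : MvPolynomial (Fin 2) ℂ) (hF : F ≠ 0) :
    MeasureTheory.volume {q : ℝ × ℝ | q ∈ UU ∧
      MvPolynomial.eval ![ZZ q.1 q.2, starRingEnd ℂ (ZZ q.1 q.2)] F = 0} = 0 := by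
  have hm : MeasurableSet {q : ℝ × ℝ | q ∈ UU ∧
      MvPolynomial.eval ![ZZ q.1 q.2, starRingEnd ℂ (ZZ q.1 q.2)] F = 0} := by
    apply UU_meas.inter
    have h1 : Measurable (fun q : ℝ × ℝ =>
        MvPolynomial.eval ![ZZ q.1 q.2, starRingEnd ℂ (ZZ q.1 q.2)] F) := by
      have hc : Continuous (fun x : Fin 2 → ℂ => MvPolynomial.eval x F) :=
        MvPolynomial.continuous_eval F
      apply hc.measurable.comp
      rw [measurable_pi_iff]
      intro i
      fin_cases i
      · exact ZZ_meas
      · exact Complex.continuous_conj.measurable.comp ZZ_meas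
    exact h1 (measurableSet_singleton 0)
  rw [MeasureTheory.Measure.volume_eq_prod, MeasureTheory.Measure.measure_prod_null hm]
  have hbad : {α : ℝ | 0 < α ∧ α < Real.pi ∧ Complex.exp (2 * α * Complex.I) ∈
      {v : ℂ | ∀ s, MvPolynomial.eval ![v * s, s] F = 0}}.Finite := by
    have : ({α : ℝ | 0 < α ∧ α < Real.pi} ∩ (fun α : ℝ => Complex.exp (2 * α * Complex.I)) ⁻¹'
      {v : ℂ | ∀ s, MvPolynomial.eval ![v * s, s] F = 0}).Finite := by
      refine Set.Finite.of_finite_image (f := fun α : ℝ => Complex.exp (2 * α * Complex.I))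
        ((badB_finite F hF).subset ?_) ?_
      · rintro _ ⟨α, ⟨-, h⟩, rfl⟩
        exact h
      · rintro a ⟨⟨ha1, ha2⟩, -⟩ b ⟨⟨hb1, hb2⟩, -⟩ hab
        obtain ⟨n, hn⟩ := Complex.exp_eq_exp_iff_exists_int.1 hab
        have h2 : a = b + n * Real.pi := by
          have : (a : ℂ) = b + n * Real.pi := by
            have hI := Complex.I_ne_zero
            have : (2 * Complex.I) * (a : ℂ) = (2 * Complex.I) * (b + n * Real.pi) := by
              linear_combination hn
            exact mul_left_cancel₀ (mul_ne_zero two_ne_zero hI) this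
          exact_mod_cast this
        have hpi := Real.pi_pos
        have h3 : n < 1 := by
          have : (n : ℝ) < 1 := by nlinarith
          exact_mod_cast this
        have h4 : -1 < n := by
          have : (-1 : ℝ) < n := by nlinarith
          exact_mod_cast this
        have : n = 0 := by omega
        rw [h2, this]; simp
    refine this.subset ?_
    rintro α ⟨h1, h2, h3⟩
    exact ⟨⟨h1, h2⟩, h3⟩
  have hae : ∀ᵐ α : ℝ, α ∉ {α : ℝ | 0 < α ∧ α < Real.pi ∧ Complex.exp (2 * α * Complex.I) ∈
      {v : ℂ | ∀ s, MvPolynomial.eval ![v * s, s] F = 0}} := hbad.countable.ae_notMem _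
  filter_upwards [hae] with α hα
  apply Set.Finite.measure_zero
  by_cases h0 : 0 < α ∧ α < Real.pi
  swap
  · convert Set.finite_empty
    ext β
    simp only [Set.mem_preimage, Set.mem_ofPred_eq, Set.mem_empty_iff_false, iff_false, UU]
    rintro ⟨⟨h1, h2, h3⟩, -⟩
    exact h0 ⟨h1, by linarith⟩
  have hv : Complex.exp (2 * α * Complex.I) ∉
      {v : ℂ | ∀ s, MvPolynomial.eval ![v * s, s] F = 0} := fun h => hα ⟨h0.1, h0.2, h⟩
  refine Set.Finite.of_finite_image (f := fun β : ℝ => starRingEnd ℂ (ZZ α β))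
        ((slice_finite F _ hv).subset ?_) ?_
  · rintro _ ⟨β, ⟨-, h⟩, rfl⟩
    simp only [Set.mem_ofPred_eq]
    rw [← ZZ_eq]
    exact h
  · rintro b ⟨⟨hb1, hb2, hb3⟩, -⟩ c ⟨⟨hc1, hc2, hc3⟩, -⟩ hbc
    simp only at hb1 hb2 hb3 hc1 hc2 hc3
    have h1 : ZZ α b = ZZ α c := (starRingEnd ℂ).injective hbc
    unfold ZZ at h1
    have h2 := mul_right_cancel₀ (Complex.exp_ne_zero _) h1
    have h3 : Real.sin b / Real.sin (α + b) = Real.sin c / Real.sin (α + c) := by exact_mod_cast h2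
    have sb : 0 < Real.sin (α + b) := Real.sin_pos_of_pos_of_lt_pi (by linarith) hb3
    have sc : 0 < Real.sin (α + c) := Real.sin_pos_of_pos_of_lt_pi (by linarith) hc3
    have sa : 0 < Real.sin α := Real.sin_pos_of_pos_of_lt_pi h0.1 h0.2
    rw [div_eq_div_iff sb.ne' sc.ne', Real.sin_add, Real.sin_add] at h3
    have h4 : Real.sin α * Real.sin (b - c) = 0 := by
      rw [Real.sin_sub]; linear_combination h3
    have h5 := (mul_eq_zero.1 h4).resolve_left sa.ne'
    have := (Real.sin_eq_zero_iff_of_lt_of_lt (by linarith) (by linarith)).1 h5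
    linarith

lemma ae_good : ∀ᵐ q : ℝ × ℝ ∂(MeasureTheory.volume.restrict UU),
    Good (ZZ q.1 q.2) (starRingEnd ℂ (ZZ q.1 q.2)) := by
  unfold Good
  rw [MeasureTheory.ae_restrict_iff' UU_meas]
  have : ∀ f : MvPolynomial (Fin 2) ℤ, ∀ᵐ q : ℝ × ℝ, q ∈ UU → f ≠ 0 →
      MvPolynomial.aeval ![ZZ q.1 q.2, starRingEnd ℂ (ZZ q.1 q.2)] f ≠ 0 := by
    intro f
    by_cases hf : f = 0
    · simp [hf]
    have hF : MvPolynomial.map (Int.castRingHom ℂ) f ≠ 0 := by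
      intro h
      apply hf
      exact (MvPolynomial.map_injective _ (Int.castRingHom ℂ).injective_int) (by rw [h, map_zero])
    have := null_one _ hF
    rw [MeasureTheory.ae_iff]
    refine MeasureTheory.measure_mono_null ?_ this
    intro q hq
    simp only [Set.mem_ofPred_eq] at hq
    push Not at hq
    refine ⟨hq.1, ?_⟩
    rw [MvPolynomial.eval_map]
    exact hq.2.2
  have hcount : Countable (MvPolynomial (Fin 2) ℤ) := by
    rw [← Cardinal.mk_le_aleph0_iff]
    refine (MvPolynomial.cardinalMk_le_max).trans ?_
    simp
  have := (MeasureTheory.ae_all_iff).2 this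
  filter_upwards [this] with q hq hU f hf
  exact hq f hU hf
def ee : Plane ≃ₗᵢ[ℝ] ℂ := Complex.orthonormalBasisOneI.repr.symm

lemma ratio_eq (a b c : Plane) (h : ¬ Collinear ℝ ({a, c, b} : Set Plane)) :
    ee c - ee a = ZZ (∠ b a c) (∠ a b c) * (ee b - ee a) ∨
    ee c - ee a = starRingEnd ℂ (ZZ (∠ b a c) (∠ a b c)) * (ee b - ee a) := by
  have hac : a ≠ c := ne₁₂_of_not_collinear h
  have hab : a ≠ b := ne₁₃_of_not_collinear h
  have hcb : c ≠ b := ne₂₃_of_not_collinear h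
  have hx : ee c - ee a ≠ 0 := sub_ne_zero.2 (fun h => hac (ee.injective h.symm))
  have hy : ee b - ee a ≠ 0 := sub_ne_zero.2 (fun h => hab (ee.injective h.symm))
  have hA : |((ee c - ee a) / (ee b - ee a)).arg| = ∠ b a c := by
    rw [← Complex.angle_eq_abs_arg hx hy, EuclideanGeometry.angle_comm, EuclideanGeometry.angle,
      ← map_sub, ← map_sub]
    exact ee.toLinearIsometry.angle_map (c - a) (b - a)
  have hC : ∠ a c b = Real.pi - (∠ b a c + ∠ a b c) := by
    have := angle_add_angle_add_angle_eq_pi c hab.symm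
    rw [EuclideanGeometry.angle_comm b c a, EuclideanGeometry.angle_comm c a b] at this
    linarith
  have hn : ‖(ee c - ee a) / (ee b - ee a)‖ = Real.sin (∠ a b c) / Real.sin (∠ b a c + ∠ a b c) := by
    have h1 := dist_eq_dist_mul_sin_angle_div_sin_angle h
    rw [hC, Real.sin_pi_sub, EuclideanGeometry.angle_comm c b a] at h1
    have h2 : ‖ee c - ee a‖ = dist a c := by
      rw [← map_sub, LinearIsometryEquiv.norm_map, dist_comm, dist_eq_norm]
    have h3 : ‖ee b - ee a‖ = dist b a := by
      rw [← map_sub, LinearIsometryEquiv.norm_map, dist_eq_norm]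
    have h4 : dist b a ≠ 0 := dist_ne_zero.2 hab.symm
    rw [norm_div, h2, h3, h1]
    field_simp
  have hp := Complex.norm_mul_exp_arg_mul_I ((ee c - ee a) / (ee b - ee a))
  rw [hn] at hp
  set θ := ((ee c - ee a) / (ee b - ee a)).arg with hθ
  rcases le_total 0 θ with h0 | h0
  · left
    rw [abs_of_nonneg h0] at hA
    rw [← div_eq_iff hy, ← hp, ZZ, hA]
  · right
    rw [abs_of_nonpos h0] at hA
    rw [← div_eq_iff hy, ← hp, ZZ, map_mul, Complex.conj_ofReal, ← Complex.exp_conj, map_mul,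
      Complex.conj_ofReal, Complex.conj_I, ← hA]
    simp

lemma triAngle_eq (p : Fin 3 → Plane) (i j k : Fin 3) (hij : i ≠ j) (hik : i ≠ k) (hjk : j ≠ k) :
    triAngle p i = ∠ (p j) (p i) (p k) := by
  unfold triAngle
  fin_cases i <;> fin_cases j <;> fin_cases k <;> simp at hij hik hjk ⊢
  all_goals first | rfl | exact EuclideanGeometry.angle_comm _ _ _

lemma ZZ_cont (α β : ℝ) (h : Real.sin (α + β) ≠ 0) :
    ContinuousAt (fun q : ℝ × ℝ => ZZ q.1 q.2) (α, β) := by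
  unfold ZZ
  have : ContinuousAt (fun q : ℝ × ℝ => Real.sin q.2 / Real.sin (q.1 + q.2)) (α, β) :=
    ContinuousAt.div (by fun_prop) (by fun_prop) h
  exact (Complex.continuous_ofReal.continuousAt.comp this).mul (by fun_prop)

lemma geom (α β δ : ℝ) (hδ : 0 < δ) (h : Real.sin (α + β) ≠ 0) :
    ∃ ε > 0, ∀ T : Fin 3 → Plane, triAngle T 0 = α → triAngle T 1 = β → ∀ S : Finset Plane,
      FormsSimilar ε T S → ∃ a b c : Plane, S = {a, b, c} ∧ ∃ t : ℂ,
        (dist t (ZZ α β) < δ ∨ dist t (starRingEnd ℂ (ZZ α β)) < δ) ∧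
        ee c - ee a = t * (ee b - ee a) := by
  obtain ⟨ε, hε, H⟩ := Metric.continuousAt_iff.1 (ZZ_cont α β h) δ hδ
  refine ⟨ε, hε, ?_⟩
  rintro T h0 h1 S ⟨p, hS, hp, σ, hσ⟩
  set i := σ.symm 0 with hi
  set j := σ.symm 1 with hj
  set k := σ.symm 2 with hk
  have hij : i ≠ j := fun h => by simpa using σ.symm.injective h
  have hik : i ≠ k := fun h => by simpa using σ.symm.injective h
  have hjk : j ≠ k := fun h => by simpa using σ.symm.injective h
  have hall : ∀ l, l = i ∨ l = j ∨ l = k := by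
    generalize i = i at *
    generalize j = j at *
    generalize k = k at *
    clear * - hij hik hjk
    revert i j k
    decide
  have hr : Set.range p = {p i, p j, p k} := by
    ext x
    simp only [Set.mem_range, Set.mem_insert_iff, Set.mem_singleton_iff]
    constructor
    · rintro ⟨l, rfl⟩
      rcases hall l with h | h | h <;> simp [h]
    · rintro (h | h | h) <;> exact ⟨_, h.symm⟩
  have hc : ¬ Collinear ℝ ({p i, p k, p j} : Set Plane) := by
    have := hp
    rw [IsTriangle, hr] at this
    rwa [show ({p i, p k, p j} : Set Plane) = {p i, p j, p k} by rw [Set.pair_comm]]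
  have hSe : S = {p i, p j, p k} := by
    apply Finset.coe_injective
    rw [hS, hr]
    simp
  have e1 := hσ i
  have e2 := hσ j
  rw [triAngle_eq p i j k hij hik hjk, hi, Equiv.apply_symm_apply, h0, ← hi] at e1
  rw [triAngle_eq p j i k hij.symm hjk hik, hj, Equiv.apply_symm_apply, h1, ← hj] at e2
  have hd := @H (∠ (p j) (p i) (p k), ∠ (p i) (p j) (p k)) (by
    rw [Prod.dist_eq]
    exact max_lt e1 e2)
  simp only at hd
  refine ⟨p i, p j, p k, hSe, ?_⟩
  rcases ratio_eq (p i) (p j) (p k) hc with h | h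
  · exact ⟨_, Or.inl hd, h⟩
  · refine ⟨_, Or.inr ?_, h⟩
    rwa [Complex.dist_conj_conj]

open Classical in
lemma split_exists {z w : ℂ} (hg : Good z w) (N : ℕ) :
    ∃ δ > 0, ∀ Q : Finset Plane, 2 ≤ Q.card → Q.card ≤ N → ∃ φ : Plane → ZMod 3,
      (∃ x ∈ Q, ∃ y ∈ Q, φ x ≠ φ y) ∧ ∀ a ∈ Q, ∀ b ∈ Q, ∀ c ∈ Q, ∀ t : ℂ,
        (dist t z < δ ∨ dist t w < δ) → ee c - ee a = t * (ee b - ee a) →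
          φ a + φ b + φ c = 0 := by
  have h1 := fun k : ℕ => core hg (0 : Fin (k + 1))
  choose d hd H using h1
  have h2 : ∀ N : ℕ, ∃ δ > 0, ∀ k < N, δ ≤ d k := by
    intro N
    induction N with
    | zero => exact ⟨1, one_pos, by simp⟩
    | succ n ih =>
      obtain ⟨δ, h, h'⟩ := ih
      refine ⟨min δ (d n), lt_min h (hd n), ?_⟩
      intro k hk
      rcases Nat.lt_succ_iff_lt_or_eq.1 hk with hk | rfl
      · exact (min_le_left _ _).trans (h' k hk)
      · exact min_le_right _ _
  obtain ⟨δ, hδ, hle⟩ := h2 N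
  refine ⟨δ, hδ, fun Q hQ2 hQN => ?_⟩
  obtain ⟨k, hk⟩ : ∃ k, Q.card = k + 1 := ⟨Q.card - 1, by omega⟩
  set g := Q.equivFinOfCardEq hk with hgdef
  obtain ⟨φ, ⟨i, hi⟩, hφ⟩ := H k (fun i => ee (g.symm i)) (by
    refine ⟨Fin.last k, fun h => ?_⟩
    have := g.symm.injective (Subtype.ext (ee.injective h))
    have := congrArg Fin.val this
    simp at this
    omega)
  refine ⟨fun x => if h : x ∈ Q then φ (g ⟨x, h⟩) else 0, ?_, ?_⟩
  · refine ⟨g.symm i, (g.symm i).2, g.symm 0, (g.symm 0).2, ?_⟩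
    simpa using hi
  · intro a ha b hb c hc t ht he
    simp only [ha, hb, hc, dif_pos]
    refine hφ _ _ _ t ?_ ?_
    · have := hle k (by omega)
      rcases ht with ht | ht
      · exact Or.inl (by linarith)
      · exact Or.inr (by linarith)
    · simpa using he

lemma simCount_eq (ε : ℝ) (T : Fin 3 → Plane) (P : Finset Plane) :
    simCount ε T P = cnt (FormsSimilar ε T) P := by
  classical
  unfold simCount cnt
  rw [← Set.ncard_coe_finset]
  congr 1
  ext S
  simp [and_assoc]

lemma main_bound {z w : ℂ} (hg : Good z w) (E : ℝ → Finset Plane → Prop)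
    (hE : ∀ δ > 0, ∃ ε > 0, ∀ S, E ε S → ∃ a b c : Plane, S = {a, b, c} ∧ ∃ t : ℂ,
        (dist t z < δ ∨ dist t w < δ) ∧ ee c - ee a = t * (ee b - ee a)) :
    ∃ ε > 0, ∀ P : Finset Plane, 1100 ≤ P.card →
      (cnt (E ε) P : ℝ) ≤ 0.25072 * (P.card.choose 3 : ℝ) := by
  classical
  obtain ⟨δ, hδ, H⟩ := split_exists hg 1100
  obtain ⟨ε, hε, HE⟩ := hE δ hδ
  refine ⟨ε, hε, fun P hP => ?_⟩
  have hb := cnt_bound (E ε) 1100 (by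
    intro Q h2 hN
    obtain ⟨φ, h1, hφ⟩ := H Q h2 hN
    refine ⟨φ, h1, ?_⟩
    intro S hS h3 hES
    obtain ⟨a, b, c, rfl, t, ht, he⟩ := HE S hES
    have hab : a ≠ b := by
      rintro rfl
      have := Finset.card_le_two (a := a) (b := c)
      simp at h3
      omega
    have hac : a ≠ c := by
      rintro rfl
      have := Finset.card_le_two (a := b) (b := a)
      simp at h3
      omega
    have hbc : b ≠ c := by
      rintro rfl
      have := Finset.card_le_two (a := a) (b := b)
      simp at h3
      omega
    rw [Finset.sum_insert (by simp [hab, hac]), Finset.sum_insert (by simp [hbc]),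
      Finset.sum_singleton, ← add_assoc]
    exact hφ a (hS (by simp)) b (hS (by simp)) c (hS (by simp)) t ht he) 1100
  have hav := cnt_avg (E ε) 1100 P.card ((1100 ^ 3 - 1100) / 24) (by norm_num) P rfl hP (by
    intro Q _ hQ
    have := hb Q hQ le_rfl
    omega)
  have hch : Nat.choose 1100 3 = 1100 * 1099 * 1098 / 6 := by
    rw [Nat.choose_eq_descFactorial_div_factorial]
    norm_num [Nat.descFactorial, Nat.factorial]
  rw [hch] at hav
  norm_num at hav
  have hav' : (cnt (E ε) P : ℝ) * (221228700 : ℕ) ≤ (55458287 : ℕ) * (P.card.choose 3 : ℝ) := by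
    exact_mod_cast hav
  have := (Nat.cast_nonneg (P.card.choose 3) : (0:ℝ) ≤ _)
  norm_num at hav' ⊢
  linarith

/-- For almost every pair `(α, β)` of angles, any triangle `T` with angles
`α, β, π - α - β` satisfies: there is `ε > 0` with
`limsup h(n, T, ε)/C(n,3) ≤ 0.25072`. -/
theorem stmt_10 :
    ∀ᵐ p : ℝ × ℝ ∂(MeasureTheory.volume.restrict
        {q : ℝ × ℝ | 0 < q.1 ∧ 0 < q.2 ∧ q.1 + q.2 < Real.pi}),
      ∀ T : Fin 3 → Plane, IsTriangle T →
        triAngle T 0 = p.1 → triAngle T 1 = p.2 →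
        ∃ ε : ℝ, 0 < ε ∧
          Filter.limsup (fun n : ℕ => (hGeo n T ε : ℝ) / (Nat.choose n 3 : ℝ))
            Filter.atTop ≤ 0.25072 := by
  have hU : ∀ᵐ q : ℝ × ℝ ∂(MeasureTheory.volume.restrict UU), q ∈ UU :=
    MeasureTheory.ae_restrict_mem UU_meas
  change ∀ᵐ p : ℝ × ℝ ∂(MeasureTheory.volume.restrict UU), _
  filter_upwards [hU, ae_good] with q hq hg T _ h0 h1
  have hs : Real.sin (q.1 + q.2) ≠ 0 :=
    (Real.sin_pos_of_pos_of_lt_pi (add_pos hq.1 hq.2.1) hq.2.2).ne'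
  obtain ⟨ε, hε, H⟩ := main_bound hg (fun ε S => FormsSimilar ε T S) (by
    intro δ hδ
    obtain ⟨ε, hε, H⟩ := geom q.1 q.2 δ hδ hs
    exact ⟨ε, hε, H T h0 h1⟩)
  refine ⟨ε, hε, ?_⟩
  apply Filter.limsup_le_of_le
  · exact Filter.isCoboundedUnder_le_of_le Filter.atTop (x := 0) (fun n => by positivity)
  filter_upwards [Filter.eventually_ge_atTop 1100] with n hn
  apply div_le_of_le_mul₀ (by positivity) (by norm_num)
  have hle : ∀ m ∈ {m | ∃ P : Finset Plane, P.card = n ∧ simCount ε T P = m},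
      (m : ℝ) ≤ 0.25072 * (n.choose 3 : ℝ) := by
    rintro m ⟨P, hP, rfl⟩
    rw [simCount_eq, ← hP]
    exact H P (by omega)
  have hmem : hGeo n T ε ∈ {m | ∃ P : Finset Plane, P.card = n ∧ simCount ε T P = m} := by
    apply Nat.sSup_mem
    · obtain ⟨P, hP⟩ := Infinite.exists_subset_card_eq (α := Plane) n
      exact ⟨_, P, hP, rfl⟩
    · refine ⟨⌊0.25072 * (n.choose 3 : ℝ)⌋₊, fun m hm => Nat.le_floor (hle m hm)⟩
  exact hle _ hmem

end
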